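/- The Cauchy spectral mixture kernel k_c and its symmetrized product-Cauchy mixture spectral density S_c form a Fourier pair in both directions: for every s ∈ ℝ^d, ∫_{ℝ^d} k_c(τ) e^{−2πi⟨s,τ⟩} dτ = S_c(s), where S_c(s) = (φ_c(s) + φ_c(−s))/2 with φ_c(s) = Σ_{q=1}^Q w_q C(s; η_q, γ_q). -/

import Mathlib

open MeasureTheory
open scoped RealInnerProductSpace BigOperators

/-- The product Cauchy density `C(s; η, γ) = ∏_i γ_i / (π (γ_i² + (s_i - η_i)²))`. -/
noncomputable def cauchyProdDensity {d : ℕ} (η : EuclideanSpace ℝ (Fin d))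
    (γ : Fin d → ℝ) (s : EuclideanSpace ℝ (Fin d)) : ℝ :=
  ∏ i, γ i / (Real.pi * ((γ i) ^ 2 + (s i - η i) ^ 2))

/-- The Cauchy spectral mixture kernel
`k_c(τ) = ∑_q w_q exp(-2π ∑_i γ_{q,i} |τ_i|) cos(2π τᵀ η_q)`. -/
noncomputable def csmKernel {d Q : ℕ} (w : Fin Q → ℝ)
    (η : Fin Q → EuclideanSpace ℝ (Fin d)) (γ : Fin Q → Fin d → ℝ)
    (τ : EuclideanSpace ℝ (Fin d)) : ℝ :=
  ∑ q, w q * Real.exp (-2 * Real.pi * ∑ i, γ q i * |τ i|) *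
    Real.cos (2 * Real.pi * ⟪τ, η q⟫)

/-!
Writing `cos (2π⟪τ, η⟫)` as the average of the characters `e^{±2πi⟪τ, η⟫}` turns each mixture
component into the average of two modulations of the product Laplace kernel
`exp (-2π ∑ γ_i |τ_i|)`, so its Fourier transform is the average of two translates, by `η` and
`-η`, of the transform of that kernel. The latter factors over the coordinates into
one-dimensional transforms of `exp (-2πγ|x|)`, each of which is the Cauchy density of scale `γ`.
Evenness of the centred Cauchy density turns the translate by `-η` at `s` into the translate by
`η` at `-s`.
-/

open scoped FourierTransform

section TwoSidedExponential

theorem eqOn_Ioi_cexp_mul_sub_mul_abs (b c : ℂ) :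
    Set.EqOn (fun x : ℝ => Complex.exp (b * x - c * (|x| : ℝ)))
      (fun x : ℝ => Complex.exp ((b - c) * x)) (Set.Ioi 0) := fun x hx => by
  simp only [abs_of_pos (Set.mem_Ioi.mp hx), sub_mul]

theorem eqOn_Iic_cexp_mul_sub_mul_abs (b c : ℂ) :
    Set.EqOn (fun x : ℝ => Complex.exp (b * x - c * (|x| : ℝ)))
      (fun x : ℝ => Complex.exp ((b + c) * x)) (Set.Iic 0) := fun x hx => by
  simp only [abs_of_nonpos (Set.mem_Iic.mp hx), Complex.ofReal_neg, mul_neg, sub_neg_eq_add,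
    add_mul]

variable {b c : ℂ}

theorem integrableOn_Ioi_cexp_mul_sub_mul_abs (h : b.re < c.re) :
    IntegrableOn (fun x : ℝ => Complex.exp (b * x - c * (|x| : ℝ))) (Set.Ioi 0) :=
  (integrableOn_exp_mul_complex_Ioi (by simpa using h) 0).congr_fun
    (eqOn_Ioi_cexp_mul_sub_mul_abs b c).symm measurableSet_Ioi

theorem integrableOn_Iic_cexp_mul_sub_mul_abs (h : -c.re < b.re) :
    IntegrableOn (fun x : ℝ => Complex.exp (b * x - c * (|x| : ℝ))) (Set.Iic 0) :=
  (integrableOn_exp_mul_complex_Iic (by simpa using neg_lt_iff_pos_add.mp h) 0).congr_fun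
    (eqOn_Iic_cexp_mul_sub_mul_abs b c).symm measurableSet_Iic

theorem integrable_cexp_mul_sub_mul_abs (h : |b.re| < c.re) :
    Integrable fun x : ℝ => Complex.exp (b * x - c * (|x| : ℝ)) := by
  obtain ⟨hleft, hright⟩ := abs_lt.mp h
  rw [← integrableOn_univ, ← Set.Iic_union_Ioi (a := (0 : ℝ))]
  exact (integrableOn_Iic_cexp_mul_sub_mul_abs hleft).union
    (integrableOn_Ioi_cexp_mul_sub_mul_abs hright)

theorem integral_cexp_mul_sub_mul_abs (h : |b.re| < c.re) :
    ∫ x : ℝ, Complex.exp (b * x - c * (|x| : ℝ)) = 2 * c / (c ^ 2 - b ^ 2) := by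
  obtain ⟨hleft, hright⟩ := abs_lt.mp h
  have hsum : 0 < (b + c).re := by simpa using neg_lt_iff_pos_add.mp hleft
  have hdiff : (b - c).re < 0 := by simpa using hright
  have hsum_ne : b + c ≠ 0 := fun h0 => hsum.ne' (by rw [h0, Complex.zero_re])
  have hdiff_ne : b - c ≠ 0 := fun h0 => hdiff.ne (by rw [h0, Complex.zero_re])
  have hden_ne : c ^ 2 - b ^ 2 ≠ 0 := by
    rw [show c ^ 2 - b ^ 2 = -((b + c) * (b - c)) by ring]
    exact neg_ne_zero.mpr (mul_ne_zero hsum_ne hdiff_ne)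
  calc ∫ x : ℝ, Complex.exp (b * x - c * (|x| : ℝ))
      = (∫ x : ℝ in Set.Iic 0, Complex.exp ((b + c) * x)) +
          ∫ x : ℝ in Set.Ioi 0, Complex.exp ((b - c) * x) := by
        rw [← intervalIntegral.integral_Iic_add_Ioi (integrableOn_Iic_cexp_mul_sub_mul_abs hleft)
            (integrableOn_Ioi_cexp_mul_sub_mul_abs hright),
          setIntegral_congr_fun measurableSet_Iic (eqOn_Iic_cexp_mul_sub_mul_abs b c),
          setIntegral_congr_fun measurableSet_Ioi (eqOn_Ioi_cexp_mul_sub_mul_abs b c)]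
    _ = 1 / (b + c) + -1 / (b - c) := by
        rw [integral_exp_mul_complex_Iic hsum, integral_exp_mul_complex_Ioi hdiff]
        simp only [Complex.ofReal_zero, mul_zero, Complex.exp_zero]
    _ = 2 * c / (c ^ 2 - b ^ 2) := by
        field_simp
        ring

theorem integrable_cexp_neg_mul_abs (hc : 0 < c.re) :
    Integrable fun x : ℝ => Complex.exp (-(c * (|x| : ℝ))) := by
  simpa using integrable_cexp_mul_sub_mul_abs (b := 0) (by simpa using hc)

theorem fourier_cexp_neg_mul_abs (hc : 0 < c.re) (ξ : ℝ) :
    𝓕 (fun x : ℝ => Complex.exp (-(c * (|x| : ℝ)))) ξ =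
      2 * c / (c ^ 2 + (2 * Real.pi * ξ) ^ 2) := by
  have hre : |(-(2 * Real.pi * ξ * Complex.I)).re| < c.re := by simpa using hc
  calc 𝓕 (fun x : ℝ => Complex.exp (-(c * (|x| : ℝ)))) ξ
      = ∫ x : ℝ, Complex.exp (-(2 * Real.pi * ξ * Complex.I) * x - c * (|x| : ℝ)) := by
        rw [Real.fourier_real_eq_integral_exp_smul]
        congr with x
        rw [smul_eq_mul, ← Complex.exp_add]
        push_cast
        ring_nf
    _ = 2 * c / (c ^ 2 + (2 * Real.pi * ξ) ^ 2) := by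
        rw [integral_cexp_mul_sub_mul_abs hre, neg_sq, mul_pow _ Complex.I, Complex.I_sq,
          mul_neg_one, sub_neg_eq_add]

end TwoSidedExponential

section ProductFunctions

variable {ι : Type*} [Fintype ι]

theorem integrable_euclideanSpace_prod {𝕜 : Type*} [NormedCommRing 𝕜] {f : ι → ℝ → 𝕜}
    (hf : ∀ i, Integrable (f i)) :
    Integrable fun v : EuclideanSpace ℝ ι => ∏ i, f i (v i) :=
  (PiLp.volume_preserving_ofLp ι).integrable_comp_of_integrable (Integrable.fintype_prod hf)

theorem fourier_euclideanSpace_prod (f : ι → ℝ → ℂ) (w : EuclideanSpace ℝ ι) :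
    𝓕 (fun v : EuclideanSpace ℝ ι => ∏ i, f i (v i)) w = ∏ i, 𝓕 (f i) (w i) := by
  have hfactor (v : EuclideanSpace ℝ ι) :
      Complex.exp ((-2 * Real.pi * ⟪v, w⟫ : ℝ) * Complex.I) • ∏ i, f i (v i) =
        ∏ i, Complex.exp ((-2 * Real.pi * ⟪v i, w i⟫ : ℝ) * Complex.I) • f i (v i) := by
    simp only [smul_eq_mul, Finset.prod_mul_distrib, ← Complex.exp_sum, ← Finset.sum_mul,
      ← Complex.ofReal_sum, PiLp.inner_apply, Finset.mul_sum]
  simp only [Real.fourier_eq', hfactor]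
  rw [← integral_fintype_prod_volume_eq_prod]
  exact (PiLp.volume_preserving_ofLp ι).integral_comp
    (MeasurableEquiv.toLp 2 (ι → ℝ)).symm.measurableEmbedding
    fun x => ∏ i, Complex.exp ((-2 * Real.pi * ⟪x i, w i⟫ : ℝ) * Complex.I) • f i (x i)

end ProductFunctions

section Modulation

theorem cos_inner_smul_eq {V E : Type*} [NormedAddCommGroup V] [InnerProductSpace ℝ V]
    [AddCommGroup E] [Module ℂ E] (f : V → E) (v₀ v : V) :
    ((Real.cos (2 * Real.pi * ⟪v, v₀⟫) : ℝ) : ℂ) • f v =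
      (2⁻¹ : ℂ) • (𝐞 ⟪v, v₀⟫ • f v + 𝐞 ⟪v, -v₀⟫ • f v) := by
  simp only [Circle.smul_def, ← add_smul, smul_smul, Real.fourierChar_apply, Complex.ofReal_cos,
    Complex.cos, inner_neg_right, mul_neg, Complex.ofReal_neg, div_eq_inv_mul]

variable {V E : Type*} [NormedAddCommGroup V] [InnerProductSpace ℝ V] [MeasurableSpace V]
  [BorelSpace V] [FiniteDimensional ℝ V] [NormedAddCommGroup E] [NormedSpace ℂ E]

theorem fourier_finsetSum_smul {κ : Type*} (t : Finset κ) (a : κ → ℂ) {f : κ → V → E}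
    (hf : ∀ q ∈ t, Integrable (f q)) (w : V) :
    𝓕 (fun v => ∑ q ∈ t, a q • f q v) w = ∑ q ∈ t, a q • 𝓕 (f q) w := by
  simp only [Real.fourier_eq, Finset.smul_sum, smul_comm _ (a _)]
  rw [integral_finsetSum t fun q hq =>
    ((Real.fourierIntegral_convergent_iff w).mpr (hf q hq)).fun_smul (a q)]
  simp only [integral_smul]

theorem fourier_fourierChar_inner_smul (f : V → E) (v₀ w : V) :
    𝓕 (fun v => 𝐞 ⟪v, v₀⟫ • f v) w = 𝓕 f (w - v₀) := by
  simp only [Real.fourier_eq, smul_smul, ← AddChar.map_add_eq_mul, inner_sub_right, neg_sub,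
    neg_add_eq_sub]

theorem integrable_fourierChar_inner_smul {f : V → E} (hf : Integrable f) (v₀ : V) :
    Integrable fun v => 𝐞 ⟪v, v₀⟫ • f v := by
  simpa using (Real.fourierIntegral_convergent_iff (-v₀)).mpr hf

theorem integrable_cos_inner_smul {f : V → E} (hf : Integrable f) (v₀ : V) :
    Integrable fun v => ((Real.cos (2 * Real.pi * ⟪v, v₀⟫) : ℝ) : ℂ) • f v := by
  simp only [cos_inner_smul_eq]
  exact ((integrable_fourierChar_inner_smul hf v₀).add
    (integrable_fourierChar_inner_smul hf (-v₀))).smul (2⁻¹ : ℂ)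

theorem fourier_cos_inner_smul {f : V → E} (hf : Integrable f) (v₀ w : V) :
    𝓕 (fun v => ((Real.cos (2 * Real.pi * ⟪v, v₀⟫) : ℝ) : ℂ) • f v) w =
      (2⁻¹ : ℂ) • (𝓕 f (w - v₀) + 𝓕 f (w + v₀)) := by
  have hadd : 𝓕 (fun v => 𝐞 ⟪v, v₀⟫ • f v + 𝐞 ⟪v, -v₀⟫ • f v) w =
      𝓕 f (w - v₀) + 𝓕 f (w + v₀) := by
    rw [← fourier_fourierChar_inner_smul f v₀, ← sub_neg_eq_add w,
      ← fourier_fourierChar_inner_smul f (-v₀)]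
    exact congrFun (VectorFourier.fourierIntegral_add (L := innerₗ V)
      Real.continuous_fourierChar continuous_inner (integrable_fourierChar_inner_smul hf v₀)
      (integrable_fourierChar_inner_smul hf (-v₀))) w
  simp only [cos_inner_smul_eq]
  rw [← hadd]
  exact congrFun (VectorFourier.fourierIntegral_const_smul _ _ _ _ (2⁻¹ : ℂ)) w

end Modulation

section CauchyLaplacePair

/-- The product Laplace kernel `exp(-2π ∑_i γ_i |τ_i|)`, the inverse Fourier transform of the
centred product Cauchy density. It is complex-valued so that `𝓕` applies to it directly. -/
noncomputable def laplaceKernel {ι : Type*} [Fintype ι] (γ : ι → ℝ)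
    (τ : EuclideanSpace ℝ ι) : ℂ :=
  Complex.exp (-2 * Real.pi * ∑ i, γ i * |τ i| : ℝ)

theorem laplaceKernel_eq_prod {ι : Type*} [Fintype ι] (γ : ι → ℝ) :
    laplaceKernel γ = fun τ => ∏ i, Complex.exp (-((2 * Real.pi * γ i : ℝ) * (|τ i| : ℝ))) := by
  funext τ
  simp only [laplaceKernel, ← Complex.exp_sum, Finset.mul_sum, Complex.ofReal_sum]
  congr! 2 with i
  push_cast
  ring

theorem integrable_laplaceKernel {ι : Type*} [Fintype ι] {γ : ι → ℝ} (hγ : ∀ i, 0 < γ i) :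
    Integrable (laplaceKernel γ) := by
  rw [laplaceKernel_eq_prod]
  exact integrable_euclideanSpace_prod fun i => integrable_cexp_neg_mul_abs (by
    rw [Complex.ofReal_re]
    exact mul_pos Real.two_pi_pos (hγ i))

variable {d : ℕ}

theorem fourier_laplaceKernel {γ : Fin d → ℝ} (hγ : ∀ i, 0 < γ i)
    (s : EuclideanSpace ℝ (Fin d)) :
    𝓕 (laplaceKernel γ) s = cauchyProdDensity 0 γ s := by
  rw [laplaceKernel_eq_prod, fourier_euclideanSpace_prod
    fun i (x : ℝ) => Complex.exp (-((2 * Real.pi * γ i : ℝ) * (|x| : ℝ))),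
    cauchyProdDensity, Complex.ofReal_prod]
  refine Finset.prod_congr rfl fun i _ => ?_
  have hscale : 0 < 2 * Real.pi * γ i := mul_pos Real.two_pi_pos (hγ i)
  have hden : γ i ^ 2 + s i ^ 2 ≠ 0 := by have := hγ i; positivity
  rw [fourier_cexp_neg_mul_abs (by rwa [Complex.ofReal_re])]
  norm_cast
  rw [PiLp.zero_apply, sub_zero, mul_pow, mul_pow _ (s i), ← mul_add]
  field_simp

theorem cauchyProdDensity_zero_sub (η : EuclideanSpace ℝ (Fin d)) (γ : Fin d → ℝ)
    (s : EuclideanSpace ℝ (Fin d)) :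
    cauchyProdDensity 0 γ (s - η) = cauchyProdDensity η γ s := by
  simp only [cauchyProdDensity, PiLp.sub_apply, PiLp.zero_apply, sub_zero]

theorem cauchyProdDensity_zero_add (η : EuclideanSpace ℝ (Fin d)) (γ : Fin d → ℝ)
    (s : EuclideanSpace ℝ (Fin d)) :
    cauchyProdDensity 0 γ (s + η) = cauchyProdDensity η γ (-s) := by
  simp only [cauchyProdDensity, PiLp.add_apply, PiLp.neg_apply, PiLp.zero_apply, sub_zero,
    ← neg_add', neg_sq]

theorem fourier_cos_inner_smul_laplaceKernel {γ : Fin d → ℝ} (hγ : ∀ i, 0 < γ i)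
    (η s : EuclideanSpace ℝ (Fin d)) :
    𝓕 (fun τ => ((Real.cos (2 * Real.pi * ⟪τ, η⟫) : ℝ) : ℂ) • laplaceKernel γ τ) s =
      (2⁻¹ : ℂ) • (cauchyProdDensity η γ s + cauchyProdDensity η γ (-s) : ℂ) := by
  rw [fourier_cos_inner_smul (integrable_laplaceKernel hγ), fourier_laplaceKernel hγ,
    fourier_laplaceKernel hγ, cauchyProdDensity_zero_sub, cauchyProdDensity_zero_add]

end CauchyLaplacePair

theorem csmKernel_eq_sum_smul_laplaceKernel {d Q : ℕ} (w : Fin Q → ℝ)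
    (η : Fin Q → EuclideanSpace ℝ (Fin d)) (γ : Fin Q → Fin d → ℝ)
    (τ : EuclideanSpace ℝ (Fin d)) :
    (csmKernel w η γ τ : ℂ) = ∑ q, (w q : ℂ) •
      ((Real.cos (2 * Real.pi * ⟪τ, η q⟫) : ℝ) : ℂ) • laplaceKernel (γ q) τ := by
  simp only [csmKernel, laplaceKernel, smul_eq_mul, Complex.ofReal_sum, Complex.ofReal_mul,
    Complex.ofReal_exp, mul_assoc, mul_comm (Complex.exp _)]

theorem fourier_csmKernel {d Q : ℕ} (w : Fin Q → ℝ) (η : Fin Q → EuclideanSpace ℝ (Fin d))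
    {γ : Fin Q → Fin d → ℝ} (hγ : ∀ q i, 0 < γ q i) (s : EuclideanSpace ℝ (Fin d)) :
    𝓕 (fun τ => (csmKernel w η γ τ : ℂ)) s =
      ∑ q, (w q : ℂ) • (2⁻¹ : ℂ) •
        (cauchyProdDensity (η q) (γ q) s + cauchyProdDensity (η q) (γ q) (-s) : ℂ) := by
  simp only [csmKernel_eq_sum_smul_laplaceKernel]
  rw [fourier_finsetSum_smul _ _ fun q _ =>
    integrable_cos_inner_smul (integrable_laplaceKernel (hγ q)) (η q)]
  simp only [fourier_cos_inner_smul_laplaceKernel (hγ _)]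

theorem csm_forward_fourier_general {d Q : ℕ} (w : Fin Q → ℝ)
    (η : Fin Q → EuclideanSpace ℝ (Fin d)) (γ : Fin Q → Fin d → ℝ)
    (hγ : ∀ q i, 0 < γ q i) (s : EuclideanSpace ℝ (Fin d)) :
    ∫ τ, ((csmKernel w η γ τ : ℝ) : ℂ) *
        Complex.exp (-(2 * Real.pi * Complex.I * (⟪s, τ⟫ : ℂ))) =
      ((((∑ q, w q * cauchyProdDensity (η q) (γ q) s) +
          (∑ q, w q * cauchyProdDensity (η q) (γ q) (-s))) / 2 : ℝ) : ℂ) := by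
  calc ∫ τ, ((csmKernel w η γ τ : ℝ) : ℂ) *
        Complex.exp (-(2 * Real.pi * Complex.I * (⟪s, τ⟫ : ℂ)))
      = 𝓕 (fun τ => (csmKernel w η γ τ : ℂ)) s := by
        rw [Real.fourier_eq']
        congr with τ
        rw [smul_eq_mul, mul_comm, real_inner_comm]
        push_cast
        ring_nf
    _ = ∑ q, (w q : ℂ) • (2⁻¹ : ℂ) •
          (cauchyProdDensity (η q) (γ q) s + cauchyProdDensity (η q) (γ q) (-s) : ℂ) :=
        fourier_csmKernel w η hγ s
    _ = _ := by
        rw [← Finset.sum_add_distrib, Finset.sum_div]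
        push_cast
        refine Finset.sum_congr rfl fun q _ => ?_
        rw [smul_eq_mul, smul_eq_mul]
        ring

/-- The forward Fourier transform of the Cauchy spectral mixture kernel `k_c`
recovers the symmetrized product-Cauchy mixture spectral density
`S_c(s) = (φ_c(s) + φ_c(-s))/2` with `φ_c(s) = ∑_q w_q C(s; η_q, γ_q)`. -/
theorem csm_forward_fourier {d Q : ℕ} (w : Fin Q → ℝ) (hw : ∀ q, 0 ≤ w q)
    (η : Fin Q → EuclideanSpace ℝ (Fin d)) (γ : Fin Q → Fin d → ℝ)
    (hγ : ∀ q i, 0 < γ q i) (s : EuclideanSpace ℝ (Fin d)) :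
    ∫ τ, ((csmKernel w η γ τ : ℝ) : ℂ) *
        Complex.exp (-(2 * Real.pi * Complex.I * (⟪s, τ⟫ : ℂ))) =
      ((((∑ q, w q * cauchyProdDensity (η q) (γ q) s) +
          (∑ q, w q * cauchyProdDensity (η q) (γ q) (-s))) / 2 : ℝ) : ℂ) := by
  exact csm_forward_fourier_general w η γ hγ s
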